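/- arXiv:1905.08781 — 2 statements merged into one kernel-verified Lean document; each statement's English description precedes it below -/
import Mathlib

section
/- There exists a single transition matrix T ∈ 𝒯 such that lim_{n→∞} p_T^n(x) = plow*(x) for every x ∈ X, where plow* := lim_{n→∞} plow^n; that is, the lower hitting probability of the imprecise Markov chain is attained by one homogeneous (precise) transition matrix compatible with 𝒯. -/
open Filter Topology

variable {X : Type*}

/-- The application of a transition "matrix" `T` to an extended-real-valued
function `f`, `(Tf)(x) = ∑ y, T x y * f y`, with the convention `0 * ⊤ = 0`
(which is the convention of `EReal` multiplication). -/
noncomputable def matApply [Fintype X] (T : X → X → ℝ) (f : X → EReal) (x : X) : EReal :=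
  ∑ y, (T x y : EReal) * f y

/-- `T` is a transition matrix: nonnegative entries, rows summing to one. -/
def IsTransMat [Fintype X] (T : X → X → ℝ) : Prop :=
  (∀ x y, 0 ≤ T x y) ∧ ∀ x, ∑ y, T x y = 1

/-- `𝒯` has separately specified rows. -/
def HasSepRows [Fintype X] (𝒯 : Set (X → X → ℝ)) : Prop :=
  ∀ sel : X → X → X → ℝ, (∀ x, sel x ∈ 𝒯) → ∃ T ∈ 𝒯, ∀ x y, T x y = sel x x y

/-- The lower transition operator of `𝒯`. -/
noncomputable def lowerOp [Fintype X] (𝒯 : Set (X → X → ℝ)) (f : X → EReal) (x : X) : EReal :=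
  ⨅ T ∈ 𝒯, matApply T f x

/-- The upper transition operator of `𝒯`. -/
noncomputable def upperOp [Fintype X] (𝒯 : Set (X → X → ℝ)) (f : X → EReal) (x : X) : EReal :=
  ⨆ T ∈ 𝒯, matApply T f x

/-- The `{0,1}`-indicator of a set `B ⊆ X`, as a real-valued function. -/
noncomputable def indR (B : Set X) : X → ℝ := fun x => Set.indicator B 1 x

/-- The restriction of the lower transition operator to real-valued functions
(on which it is real-valued). -/
noncomputable def lowerOpR [Fintype X] (𝒯 : Set (X → X → ℝ)) (f : X → ℝ) (x : X) : ℝ :=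
  (lowerOp 𝒯 (fun y => (f y : EReal)) x).toReal

/-- The restriction of the upper transition operator to real-valued functions
(on which it is real-valued). -/
noncomputable def upperOpR [Fintype X] (𝒯 : Set (X → X → ℝ)) (f : X → ℝ) (x : X) : ℝ :=
  (upperOp 𝒯 (fun y => (f y : EReal)) x).toReal

/-- The lower hitting-probability iterates: `plow⁰ = 1_A`,
`plowⁿ⁺¹ = 1_A + 1_{Aᶜ} · (L plowⁿ)`. -/
noncomputable def plowIter [Fintype X] (𝒯 : Set (X → X → ℝ)) (A : Set X) : ℕ → X → ℝ
  | 0 => indR A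
  | n + 1 => fun x => indR A x + indR Aᶜ x * lowerOpR 𝒯 (plowIter 𝒯 A n) x

/-- The upper hitting-probability iterates: `pup⁰ = 1_A`,
`pupⁿ⁺¹ = 1_A + 1_{Aᶜ} · (U pupⁿ)`. -/
noncomputable def pupIter [Fintype X] (𝒯 : Set (X → X → ℝ)) (A : Set X) : ℕ → X → ℝ
  | 0 => indR A
  | n + 1 => fun x => indR A x + indR Aᶜ x * upperOpR 𝒯 (pupIter 𝒯 A n) x
/-- The hitting-probability iterates for a single (precise) transition matrix `T`:
`p_T⁰ = 1_A`, `p_Tⁿ⁺¹ = 1_A + 1_{Aᶜ} · (T p_Tⁿ)`; their pointwise limit is the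
probability of ever hitting `A` for the homogeneous Markov chain with matrix `T`. -/
noncomputable def pPrecIter [Fintype X] (T : X → X → ℝ) (A : Set X) : ℕ → X → ℝ
  | 0 => indR A
  | n + 1 => fun x => indR A x + indR Aᶜ x * ∑ y, T x y * pPrecIter T A n y

/-! The limit `p` of the iterates of `f ↦ 1_A + 1_{Aᶜ} · (L f)` from `1_A` is a fixed point of this
map, because `L` is continuous. Separately specified rows provide one `T ∈ 𝒯` attaining the minimum
`L p` in all rows simultaneously, so `p` is also a fixed point of `f ↦ 1_A + 1_{Aᶜ} · (T f)`. By
monotonicity the iterates of the latter map from `1_A` stay below `p`, and they dominate those of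
the former since `L ≤ T`; hence they converge to `p` as well. -/

section Attainment

open Function Matrix

theorem tendsto_iterate_of_le_of_isFixedPt {α : Type*} [Preorder α] [TopologicalSpace α]
    [∀ a : α, TendstoIxxClass Set.Icc (𝓝 a) (𝓝 a)] {F G : α → α} {a p : α} (hG : Monotone G)
    (hFG : F ≤ G) (hap : a ≤ p) (hp : IsFixedPt G p)
    (hF : Tendsto (fun n => F^[n] a) atTop (𝓝 p)) :
    Tendsto (fun n => G^[n] a) atTop (𝓝 p) := by
  have hlower (n : ℕ) : F^[n] a ≤ G^[n] a := hG.le_iterate_of_le hFG n a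
  have hupper (n : ℕ) : G^[n] a ≤ p := (hG.iterate n hap).trans_eq (hp.iterate n)
  exact (hF.Icc tendsto_const_nhds).of_smallSets (.of_forall fun n => ⟨hlower n, hupper n⟩)

theorem monotone_mulVec {m n R : Type*} [Fintype n] [Semiring R] [PartialOrder R]
    [IsOrderedRing R] {M : Matrix m n R} (hM : ∀ i j, 0 ≤ M i j) : Monotone M.mulVec :=
  fun _ _ hfg i => dotProduct_le_dotProduct_of_nonneg_left hfg (hM i)

theorem indR_nonneg (A : Set X) : 0 ≤ indR A :=
  Set.indicator_nonneg fun _ _ => zero_le_one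

theorem indR_add_indR_compl (A : Set X) : indR A + indR Aᶜ = 1 :=
  Set.indicator_self_add_compl A 1

/-- The operator `f ↦ 1_A + 1_{Aᶜ} · (P f)`, which turns a transition operator `P` on real-valued
functions into one step of the recursion for the probability of hitting `A`. Taking `P` arbitrary
covers both the lower transition operator and the action of a single matrix. -/
noncomputable def hitOp (A : Set X) (P : (X → ℝ) → X → ℝ) (f : X → ℝ) : X → ℝ :=
  indR A + indR Aᶜ * P f

section HitOp

variable {A : Set X} {P Q : (X → ℝ) → X → ℝ}

theorem hitOp_mono {f g : X → ℝ} (h : P f ≤ Q g) : hitOp A P f ≤ hitOp A Q g :=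
  add_le_add_right (mul_le_mul_of_nonneg_left h (indR_nonneg Aᶜ)) (indR A)

theorem continuous_hitOp (hP : Continuous P) : Continuous (hitOp A P) :=
  continuous_const.add (continuous_const.mul hP)

theorem indR_le_hitOp {f : X → ℝ} (hf : 0 ≤ P f) : indR A ≤ hitOp A P f :=
  le_add_of_nonneg_right (mul_nonneg (indR_nonneg Aᶜ) hf)

theorem hitOp_le_one {f : X → ℝ} (hf : P f ≤ 1) : hitOp A P f ≤ 1 :=
  (hitOp_mono (Q := id) (g := 1) hf).trans_eq <| by
    rw [hitOp, id, mul_one, indR_add_indR_compl]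

end HitOp

section Fintype

variable [Fintype X]

theorem matApply_coe (T : X → X → ℝ) (f : X → ℝ) (x : X) :
    matApply T (fun y => (f y : EReal)) x = ((T x ⬝ᵥ f : ℝ) : EReal) := by
  simp only [matApply, dotProduct, ← EReal.coe_mul]
  exact (map_sum (⟨⟨Real.toEReal, rfl⟩, EReal.coe_add⟩ : ℝ →+ EReal) _ _).symm

theorem pPrecIter_eq_iterate (T : X → X → ℝ) (A : Set X) (n : ℕ) :
    pPrecIter T A n = (hitOp A (of T).mulVec)^[n] (indR A) := by
  induction n with
  | zero => rfl
  | succ n ih => rw [iterate_succ_apply', ← ih]; rfl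

theorem plowIter_eq_iterate (𝒯 : Set (X → X → ℝ)) (A : Set X) (n : ℕ) :
    plowIter 𝒯 A n = (hitOp A (lowerOpR 𝒯))^[n] (indR A) := by
  induction n with
  | zero => rfl
  | succ n ih => rw [iterate_succ_apply', ← ih]; rfl

variable {𝒯 : Set (X → X → ℝ)}

theorem isCompact_of_isTransMat (hmem : ∀ T ∈ 𝒯, IsTransMat T) (hcl : IsClosed 𝒯) :
    IsCompact 𝒯 := by
  refine (isCompact_Icc (a := 0) (b := 1)).of_isClosed_subset hcl fun T hT => ?_
  obtain ⟨hnonneg, hsum⟩ := hmem T hT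
  refine ⟨hnonneg, fun x y => ?_⟩
  exact (Finset.single_le_sum (fun z _ => hnonneg x z) (Finset.mem_univ y)).trans_eq (hsum x)

theorem isLeast_lowerOpR (hcpt : IsCompact 𝒯) (hne : 𝒯.Nonempty) (f : X → ℝ) (x : X) :
    IsLeast ((fun T => T x ⬝ᵥ f) '' 𝒯) (lowerOpR 𝒯 f x) := by
  have hcont : Continuous fun T : X → X → ℝ => T x ⬝ᵥ f := by fun_prop
  obtain ⟨T, hT, hmin⟩ := hcpt.exists_isMinOn hne hcont.continuousOn
  have hlower : lowerOp 𝒯 (fun y => (f y : EReal)) x = ((T x ⬝ᵥ f : ℝ) : EReal) := by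
    simp only [lowerOp, matApply_coe]
    exact le_antisymm (iInf₂_le T hT) (le_iInf₂ fun S hS => EReal.coe_le_coe (hmin hS))
  rw [lowerOpR, hlower, EReal.toReal_coe]
  exact ⟨Set.mem_image_of_mem _ hT, Set.forall_mem_image.2 fun S hS => hmin hS⟩

theorem lowerOpR_le_mulVec (hcpt : IsCompact 𝒯) {T : X → X → ℝ} (hT : T ∈ 𝒯) :
    lowerOpR 𝒯 ≤ (of T).mulVec :=
  fun f x => (isLeast_lowerOpR hcpt ⟨T, hT⟩ f x).2 (Set.mem_image_of_mem _ hT)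

theorem continuous_lowerOpR (hcpt : IsCompact 𝒯) (hne : 𝒯.Nonempty) : Continuous (lowerOpR 𝒯) := by
  refine continuous_pi fun x => ?_
  have hcont : Continuous fun q : (X → ℝ) × (X → X → ℝ) => q.2 x ⬝ᵥ q.1 := by fun_prop
  simpa only [(isLeast_lowerOpR hcpt hne _ x).csInf_eq] using
    hcpt.continuous_sInf (f := fun f T => T x ⬝ᵥ f) hcont

theorem exists_mem_mulVec_eq_lowerOpR (hcpt : IsCompact 𝒯) (hne : 𝒯.Nonempty)
    (hsep : HasSepRows 𝒯) (f : X → ℝ) : ∃ T ∈ 𝒯, of T *ᵥ f = lowerOpR 𝒯 f := by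
  choose sel hsel hmin using fun x => (isLeast_lowerOpR hcpt hne f x).1
  obtain ⟨T, hT, hrow⟩ := hsep sel hsel
  exact ⟨T, hT, funext fun x => (congrArg (· ⬝ᵥ f) (funext (hrow x))).trans (hmin x)⟩

theorem monotone_lowerOpR (hcpt : IsCompact 𝒯) (hne : 𝒯.Nonempty) (hnonneg : ∀ T ∈ 𝒯, 0 ≤ T) :
    Monotone (lowerOpR 𝒯) := by
  intro f g hfg x
  obtain ⟨T, hT, hmin⟩ := (isLeast_lowerOpR hcpt hne g x).1
  calc lowerOpR 𝒯 f x ≤ T x ⬝ᵥ f := lowerOpR_le_mulVec hcpt hT f x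
    _ ≤ T x ⬝ᵥ g := monotone_mulVec (hnonneg T hT) hfg x
    _ = lowerOpR 𝒯 g x := hmin

theorem lowerOpR_nonneg (hcpt : IsCompact 𝒯) (hne : 𝒯.Nonempty) (hnonneg : ∀ T ∈ 𝒯, 0 ≤ T)
    {f : X → ℝ} (hf : 0 ≤ f) : 0 ≤ lowerOpR 𝒯 f := by
  intro x
  obtain ⟨T, hT, hmin⟩ := (isLeast_lowerOpR hcpt hne f x).1
  exact (dotProduct_nonneg_of_nonneg (hnonneg T hT x) hf).trans_eq hmin

theorem monotone_plowIter (hcpt : IsCompact 𝒯) (hne : 𝒯.Nonempty) (hnonneg : ∀ T ∈ 𝒯, 0 ≤ T)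
    (A : Set X) : Monotone (plowIter 𝒯 A) := by
  rw [funext (plowIter_eq_iterate 𝒯 A)]
  exact Monotone.monotone_iterate_of_le_map
    (fun _ _ hfg => hitOp_mono (monotone_lowerOpR hcpt hne hnonneg hfg))
    (indR_le_hitOp (lowerOpR_nonneg hcpt hne hnonneg (indR_nonneg A)))

theorem plowIter_le_one (hcpt : IsCompact 𝒯) (hnonneg : ∀ T ∈ 𝒯, 0 ≤ T) {T : X → X → ℝ}
    (hT : T ∈ 𝒯) (hsum : ∀ x, ∑ y, T x y ≤ 1) (A : Set X) (n : ℕ) : plowIter 𝒯 A n ≤ 1 := by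
  have hone : lowerOpR 𝒯 1 ≤ 1 := fun x =>
    (lowerOpR_le_mulVec hcpt hT 1 x).trans ((dotProduct_one (T x)).trans_le (hsum x))
  induction n with
  | zero => exact Set.indicator_le_self' fun _ _ => zero_le_one
  | succ n ih => exact hitOp_le_one ((monotone_lowerOpR hcpt ⟨T, hT⟩ hnonneg ih).trans hone)

theorem bddAbove_range_plowIter (hmem : ∀ T ∈ 𝒯, IsTransMat T) (hne : 𝒯.Nonempty)
    (hcl : IsClosed 𝒯) (A : Set X) (x : X) :
    BddAbove (Set.range fun n => plowIter 𝒯 A n x) := by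
  obtain ⟨T, hT⟩ := hne
  have hle (n : ℕ) : plowIter 𝒯 A n ≤ 1 :=
    plowIter_le_one (isCompact_of_isTransMat hmem hcl) (fun S hS => (hmem S hS).1) hT
      (fun y => ((hmem T hT).2 y).le) A n
  exact ⟨1, Set.forall_mem_range.2 fun n => hle n x⟩

theorem exists_mem_tendsto_pPrecIter (hcpt : IsCompact 𝒯) (hne : 𝒯.Nonempty)
    (hnonneg : ∀ T ∈ 𝒯, 0 ≤ T) (hsep : HasSepRows 𝒯) {A : Set X} {p : X → ℝ}
    (hp : Tendsto (plowIter 𝒯 A) atTop (𝓝 p)) :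
    ∃ T ∈ 𝒯, Tendsto (pPrecIter T A) atTop (𝓝 p) := by
  have hle : indR A ≤ p := (monotone_plowIter hcpt hne hnonneg A).ge_of_tendsto hp 0
  rw [funext (plowIter_eq_iterate 𝒯 A)] at hp
  have hcont : Continuous (hitOp A (lowerOpR 𝒯)) :=
    continuous_hitOp (continuous_lowerOpR hcpt hne)
  have hfix : IsFixedPt (hitOp A (lowerOpR 𝒯)) p :=
    isFixedPt_of_tendsto_iterate hp hcont.continuousAt
  obtain ⟨T, hT, hTp⟩ := exists_mem_mulVec_eq_lowerOpR hcpt hne hsep p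
  have hTfix : IsFixedPt (hitOp A (of T).mulVec) p := by rwa [IsFixedPt, hitOp, hTp]
  have hTmono : Monotone (hitOp A (of T).mulVec) := fun _ _ hfg =>
    hitOp_mono (monotone_mulVec (hnonneg T hT) hfg)
  have hlower : hitOp A (lowerOpR 𝒯) ≤ hitOp A (of T).mulVec := fun f =>
    hitOp_mono (lowerOpR_le_mulVec hcpt hT f)
  refine ⟨T, hT, ?_⟩
  rw [funext (pPrecIter_eq_iterate T A)]
  exact tendsto_iterate_of_le_of_isFixedPt hTmono hlower hle hTfix hp

theorem lower_hitting_prob_attained_general (hcpt : IsCompact 𝒯) (hne : 𝒯.Nonempty)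
    (hnonneg : ∀ T ∈ 𝒯, 0 ≤ T) (hsep : HasSepRows 𝒯) (A : Set X)
    (hbdd : ∀ x, BddAbove (Set.range fun n => plowIter 𝒯 A n x)) :
    ∃ plowStar : X → ℝ,
      (∀ x, Tendsto (fun n => plowIter 𝒯 A n x) atTop (𝓝 (plowStar x))) ∧
      ∃ T ∈ 𝒯, ∀ x, Tendsto (fun n => pPrecIter T A n x) atTop (𝓝 (plowStar x)) := by
  have hmono := monotone_plowIter hcpt hne hnonneg A
  obtain ⟨p, hp⟩ : ∃ p, Tendsto (plowIter 𝒯 A) atTop (𝓝 p) :=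
    ⟨_, tendsto_pi_nhds.2 fun x => tendsto_atTop_ciSup (fun _ _ hmn => hmono hmn x) (hbdd x)⟩
  obtain ⟨T, hT, hTp⟩ := exists_mem_tendsto_pPrecIter hcpt hne hnonneg hsep hp
  exact ⟨p, tendsto_pi_nhds.1 hp, T, hT, tendsto_pi_nhds.1 hTp⟩

end Fintype

end Attainment

/-- The lower hitting probability of the imprecise Markov chain is attained by a single
homogeneous (precise) transition matrix compatible with `𝒯`. -/
theorem lower_hitting_prob_attained [Fintype X] [Nonempty X]
    (𝒯 : Set (X → X → ℝ))
    (hmem : ∀ T ∈ 𝒯, IsTransMat T) (hne : 𝒯.Nonempty) (hcl : IsClosed 𝒯)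
    (hcv : Convex ℝ 𝒯) (hsep : HasSepRows 𝒯) (A : Set X) :
    ∃ plowStar : X → ℝ,
      (∀ x, Tendsto (fun n => plowIter 𝒯 A n x) atTop (𝓝 (plowStar x))) ∧
      ∃ T ∈ 𝒯, ∀ x, Tendsto (fun n => pPrecIter T A n x) atTop (𝓝 (plowStar x)) :=
  lower_hitting_prob_attained_general (isCompact_of_isTransMat hmem hcl) hne
    (fun T hT => (hmem T hT).1) hsep A (bddAbove_range_plowIter hmem hne hcl A)
end

section
/- Define 𝒞 := {x ∈ A^c : (U^n 1_A)(x) = 0 for all n ≥ 1}, and for each x ∈ A^c \ 𝒞 let n_x be the least n ≥ 1 such that (U^n 1_A)(x) > 0. If A^c \ 𝒞 is nonempty, then there exists a single transition matrix T ∈ 𝒯 such that (T^{n_x} 1_A)(x) > 0 for every x ∈ A^c \ 𝒞, where T^n denotes the n-th matrix power of T. -/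
open Filter Topology

variable {X : Type*}

/-- The `{0,1}`-indicator of a set `B ⊆ X`, as an extended-real-valued function. -/
noncomputable def indE (B : Set X) : X → EReal := fun x => Set.indicator B 1 x

/-- The set `𝒞` of states in `Aᶜ` from which reaching `A` in any finite number of steps
has upper probability zero: `(Uⁿ 1_A)(x) = 0` for all `n ≥ 1`. -/
def badC [Fintype X] (𝒯 : Set (X → X → ℝ)) (A : Set X) : Set X :=
  {x | x ∈ Aᶜ ∧ ∀ n, 1 ≤ n → (upperOp 𝒯)^[n] (indE A) x = 0}

/-!
For `f ≥ 0` and `n ≥ 1`, the iterate `Uⁿ f` is positive at a state exactly when the support of `f`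
can be reached from it in `n` steps, each of positive probability under some matrix of `𝒯`. Let
`n ≥ 1` be the first such time for `x`, and let `y` be the first step of a path that witnesses it.
No path from `y` to the support is shorter than the remaining `n - 1` steps, so `y` either lies in
the support or has first time `n - 1`, and any shortest path from `y` may serve as continuation.
Hence one successor per state suffices, and the separately specified rows combine these choices
into a single matrix.
-/

section FirstTimes

variable {r : X → X → Prop} {P : ℕ → X → Prop}

theorem exists_isLeast_of_isLeast_succ (hP : ∀ n x, P (n + 1) x ↔ ∃ y, r x y ∧ P n y)
    {x : X} {n : ℕ} (hx : IsLeast {m | 1 ≤ m ∧ P m x} (n + 1)) :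
    ∃ y, r x y ∧ IsLeast {m | P m y} n := by
  obtain ⟨y, hxy, hy⟩ := (hP n x).1 hx.1.2
  refine ⟨y, hxy, hy, fun m hm => ?_⟩
  exact Nat.le_of_succ_le_succ (hx.2 ⟨m.succ_pos, (hP m x).2 ⟨y, hxy, hm⟩⟩)

theorem exists_successor_isLeast (hP : ∀ n x, P (n + 1) x ↔ ∃ y, r x y ∧ P n y) :
    ∃ σ : X → X, ∀ x n, IsLeast {m | 1 ≤ m ∧ P m x} (n + 1) →
      r x (σ x) ∧ IsLeast {m | P m (σ x)} n := by
  suffices h : ∀ x, ∃ y, ∀ n, IsLeast {m | 1 ≤ m ∧ P m x} (n + 1) →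
      r x y ∧ IsLeast {m | P m y} n from Classical.skolem.1 h
  intro x
  by_cases hx : ∃ n, IsLeast {m | 1 ≤ m ∧ P m x} (n + 1)
  · obtain ⟨n, hn⟩ := hx
    obtain ⟨y, hxy, hy⟩ := exists_isLeast_of_isLeast_succ hP hn
    refine ⟨y, fun k hk => ⟨hxy, ?_⟩⟩
    rwa [Nat.succ_injective (hk.unique hn)]
  · exact ⟨x, fun n hn => absurd ⟨n, hn⟩ hx⟩

end FirstTimes

/-- The edge relation of the upper transition graph of `𝒯`: some matrix of `𝒯` gives positive weight
to the transition from `x` to `y`. -/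
def IsPossibleStep (𝒯 : Set (X → X → ℝ)) (x y : X) : Prop :=
  ∃ T ∈ 𝒯, 0 < T x y

section Operators

variable [Fintype X] {T : X → X → ℝ} {𝒯 : Set (X → X → ℝ)} {f : X → EReal}

theorem matApply_nonneg (hT : 0 ≤ T) (hf : 0 ≤ f) : 0 ≤ matApply T f :=
  fun x => Finset.sum_nonneg fun y _ => mul_nonneg (EReal.coe_nonneg.2 (hT x y)) (hf y)

theorem matApply_pos_iff (hT : 0 ≤ T) (hf : 0 ≤ f) (x : X) :
    0 < matApply T f x ↔ ∃ y, 0 < T x y ∧ 0 < f y := by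
  have hterm (y : X) : 0 ≤ (T x y : EReal) * f y :=
    mul_nonneg (EReal.coe_nonneg.2 (hT x y)) (hf y)
  have hterm_pos (y : X) : 0 < (T x y : EReal) * f y ↔ 0 < T x y ∧ 0 < f y := by
    have hTxy : 0 ≤ T x y := hT x y
    have hfy : 0 ≤ f y := hf y
    rw [(hterm y).lt_iff_ne', mul_ne_zero_iff, EReal.coe_ne_zero, hTxy.lt_iff_ne', hfy.lt_iff_ne']
  simp only [matApply, Finset.sum_pos_iff_of_nonneg fun y _ => hterm y, Finset.mem_univ, true_and,
    hterm_pos]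

theorem iterate_matApply_nonneg (hT : 0 ≤ T) (hf : 0 ≤ f) (n : ℕ) : 0 ≤ (matApply T)^[n] f :=
  Function.Iterate.rec (0 ≤ ·) hf (fun _ => matApply_nonneg hT) n

theorem upperOp_nonneg (h𝒯 : ∀ T ∈ 𝒯, 0 ≤ T) (hne : 𝒯.Nonempty) (hf : 0 ≤ f) :
    0 ≤ upperOp 𝒯 f := by
  obtain ⟨T, hT⟩ := hne
  exact fun x => le_iSup₂_of_le T hT (matApply_nonneg (h𝒯 T hT) hf x)

theorem iterate_upperOp_nonneg (h𝒯 : ∀ T ∈ 𝒯, 0 ≤ T) (hne : 𝒯.Nonempty) (hf : 0 ≤ f) (n : ℕ) :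
    0 ≤ (upperOp 𝒯)^[n] f :=
  Function.Iterate.rec (0 ≤ ·) hf (fun _ => upperOp_nonneg h𝒯 hne) n

theorem upperOp_pos_iff (h𝒯 : ∀ T ∈ 𝒯, 0 ≤ T) (hf : 0 ≤ f) (x : X) :
    0 < upperOp 𝒯 f x ↔ ∃ y, IsPossibleStep 𝒯 x y ∧ 0 < f y := by
  simp only [upperOp, lt_iSup_iff, IsPossibleStep]
  constructor
  · rintro ⟨T, hT, hpos⟩
    obtain ⟨y, hxy, hy⟩ := (matApply_pos_iff (h𝒯 T hT) hf x).1 hpos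
    exact ⟨y, ⟨T, hT, hxy⟩, hy⟩
  · rintro ⟨y, ⟨T, hT, hxy⟩, hy⟩
    exact ⟨T, hT, (matApply_pos_iff (h𝒯 T hT) hf x).2 ⟨y, hxy, hy⟩⟩

theorem iterate_succ_upperOp_pos_iff (h𝒯 : ∀ T ∈ 𝒯, 0 ≤ T) (hne : 𝒯.Nonempty) (hf : 0 ≤ f)
    (n : ℕ) (x : X) :
    0 < (upperOp 𝒯)^[n + 1] f x ↔ ∃ y, IsPossibleStep 𝒯 x y ∧ 0 < (upperOp 𝒯)^[n] f y := by
  rw [Function.iterate_succ_apply']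
  exact upperOp_pos_iff h𝒯 (iterate_upperOp_nonneg h𝒯 hne hf n) x

theorem HasSepRows.exists_forall_pos (hsep : HasSepRows 𝒯) (hne : 𝒯.Nonempty) (σ : X → X) :
    ∃ T ∈ 𝒯, ∀ x, IsPossibleStep 𝒯 x (σ x) → 0 < T x (σ x) := by
  have hrow (x : X) : ∃ T ∈ 𝒯, IsPossibleStep 𝒯 x (σ x) → 0 < T x (σ x) := by
    by_cases hx : IsPossibleStep 𝒯 x (σ x)
    · obtain ⟨T, hT, hpos⟩ := hx
      exact ⟨T, hT, fun _ => hpos⟩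
    · exact hne.imp fun T hT => ⟨hT, fun h => absurd h hx⟩
  choose sel hsel hpos using hrow
  obtain ⟨T, hT, hTsel⟩ := hsep sel hsel
  exact ⟨T, hT, fun x hx => (hTsel x (σ x)).symm ▸ hpos x hx⟩

theorem exists_transMat_reaching_general (h𝒯 : ∀ T ∈ 𝒯, 0 ≤ T) (hne : 𝒯.Nonempty)
    (hsep : HasSepRows 𝒯) (hf : 0 ≤ f) :
    ∃ T ∈ 𝒯, ∀ n x, IsLeast {m | 1 ≤ m ∧ 0 < (upperOp 𝒯)^[m] f x} n →
      0 < (matApply T)^[n] f x := by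
  obtain ⟨σ, hσ⟩ := exists_successor_isLeast (P := fun n x => 0 < (upperOp 𝒯)^[n] f x)
    (iterate_succ_upperOp_pos_iff h𝒯 hne hf)
  obtain ⟨T, hT, hTσ⟩ := hsep.exists_forall_pos hne σ
  refine ⟨T, hT, fun n => ?_⟩
  induction n with
  | zero => exact fun x hx => absurd hx.1.1 (Nat.not_succ_le_zero 0)
  | succ n ih =>
    intro x hx
    obtain ⟨hstep, hleast⟩ := hσ x n hx
    have hrest : 0 < (matApply T)^[n] f (σ x) := by
      rcases n.eq_zero_or_pos with rfl | hn
      · exact hleast.1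
      · exact ih (σ x) ⟨⟨hn, hleast.1⟩, fun m hm => hleast.2 hm.2⟩
    rw [Function.iterate_succ_apply',
      matApply_pos_iff (h𝒯 T hT) (iterate_matApply_nonneg (h𝒯 T hT) hf n)]
    exact ⟨σ x, hTσ x hstep, hrest⟩

end Operators

theorem indE_nonneg (B : Set X) : 0 ≤ indE B :=
  Set.indicator_nonneg fun _ _ => zero_le_one

/-- If `Aᶜ \ 𝒞` is nonempty then there is a single transition matrix `T ∈ 𝒯` such that
`(T^{n_x} 1_A)(x) > 0` for every `x ∈ Aᶜ \ 𝒞`, where `n_x` is the least `n ≥ 1` with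
`(Uⁿ 1_A)(x) > 0`. -/
theorem exists_transMat_reaching [Fintype X] [Nonempty X]
    (𝒯 : Set (X → X → ℝ))
    (hmem : ∀ T ∈ 𝒯, IsTransMat T) (hne : 𝒯.Nonempty) (hcl : IsClosed 𝒯)
    (hcv : Convex ℝ 𝒯) (hsep : HasSepRows 𝒯) (A : Set X)
    (hne' : (Aᶜ \ badC 𝒯 A).Nonempty)
    (nx : X → ℕ)
    (hnx : ∀ x ∈ Aᶜ \ badC 𝒯 A,
      1 ≤ nx x ∧ 0 < (upperOp 𝒯)^[nx x] (indE A) x ∧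
      ∀ m, 1 ≤ m → m < nx x → ¬ 0 < (upperOp 𝒯)^[m] (indE A) x) :
    ∃ T ∈ 𝒯, ∀ x ∈ Aᶜ \ badC 𝒯 A, 0 < (matApply T)^[nx x] (indE A) x := by
  obtain ⟨T, hT, hpos⟩ :=
    exists_transMat_reaching_general (fun T hT => (hmem T hT).1) hne hsep (indE_nonneg A)
  refine ⟨T, hT, fun x hx => hpos (nx x) x ?_⟩
  obtain ⟨hone, hreach, hmin⟩ := hnx x hx
  exact ⟨⟨hone, hreach⟩, fun m hm => not_lt.1 fun hlt => hmin m hm.1 hlt hm.2⟩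
end
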